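/- arXiv:2502.12394 — 2 statements merged into one kernel-verified Lean document; each statement's English description precedes it below -/
import Mathlib

section
/- Let d ≥ 1, 1 ≤ a ≤ d+1, and 0 < m_1 < m_2 ≤ 2d+2 be integers. Then: (i) if m_1 = a and m_2 = a+d+1, then h_d^{(a)}(n) − ℓ_{2d+2}^{(m_1,m_2)}(n) → 0 as n → ∞; (ii) if m_1 ≥ a and m_2 ≥ a+d+1 with these two inequalities not both equalities, then h_d^{(a)}(n) − ℓ_{2d+2}^{(m_1,m_2)}(n) → +∞; (iii) if m_1 ≤ a and m_2 ≤ a+d+1 with these two inequalities not both equalities, then h_d^{(a)}(n) − ℓ_{2d+2}^{(m_1,m_2)}(n) → −∞. -/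
open Multiset Finset Filter

/-- A partition is encoded as a nonempty multiset of positive integers (its parts). -/
def IsPartition (M : Multiset ℕ) : Prop := M ≠ 0 ∧ ∀ x ∈ M, 0 < x

/-- The perimeter of a partition: (largest part) + (number of parts) - 1. -/
def perim (M : Multiset ℕ) : ℕ := M.sup + Multiset.card M - 1

/-- `rP n P` counts the partitions (of any sum) with perimeter `n` satisfying `P`. -/
noncomputable def rP (n : ℕ) (P : Multiset ℕ → Prop) : ℕ :=
  Set.ncard {M : Multiset ℕ | IsPartition M ∧ perim M = n ∧ P M}

/-- `ellP d a b n`: partitions of perimeter n with every part ≡ a or ≡ b (mod d). -/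
noncomputable def ellP (d a b n : ℕ) : ℕ :=
  rP n (fun M => ∀ x ∈ M, x % d = a % d ∨ x % d = b % d)

/-- `hP d a n`: partitions of perimeter n with d-distinct parts, all parts ≥ a. -/
noncomputable def hP (d a n : ℕ) : ℕ :=
  rP n (fun M => M.Nodup ∧ (∀ x ∈ M, a ≤ x) ∧
    ∀ x ∈ M, ∀ y ∈ M, x ≠ y → d ≤ max x y - min x y)

/-- generating function of the counts -/
noncomputable def genF (P : Multiset ℕ → Prop) : PowerSeries ℤ :=
  PowerSeries.mk (fun n => (rP n P : ℤ))

lemma le_sup_of_mem' {M : Multiset ℕ} {x : ℕ} (h : x ∈ M) : x ≤ M.sup := Multiset.le_sup h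

lemma part_sup_pos {M : Multiset ℕ} (h : IsPartition M) : 1 ≤ M.sup ∧ 1 ≤ Multiset.card M := by
  obtain ⟨x, hx⟩ := Multiset.exists_mem_of_ne_zero h.1
  exact ⟨le_trans (h.2 x hx) (le_sup_of_mem' hx), Multiset.card_pos.2 h.1⟩

lemma finite_perim (n : ℕ) (P : Multiset ℕ → Prop) :
    {M : Multiset ℕ | IsPartition M ∧ perim M = n ∧ P M}.Finite := by
  refine (Set.finite_Iic (n • (Multiset.range (n + 1)))).subset ?_
  rintro M ⟨hM, hn, -⟩
  have := part_sup_pos hM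
  unfold perim at hn
  rw [Set.mem_Iic, Multiset.le_iff_count]
  intro x
  by_cases hx : x ∈ M
  · have h1 := le_sup_of_mem' hx
    have h2 := Multiset.count_le_card x M
    have h3 : x ∈ Multiset.range (n + 1) := by rw [Multiset.mem_range]; omega
    have h4 := Multiset.one_le_count_iff_mem.2 h3
    rw [Multiset.count_nsmul]
    have h5 := Nat.mul_le_mul_left n h4
    omega
  · rw [Multiset.count_eq_zero_of_notMem hx]; exact Nat.zero_le _

lemma rP_zero (P : Multiset ℕ → Prop) : rP 0 P = 0 := by
  unfold rP
  convert Set.ncard_empty (Multiset ℕ)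
  ext M
  simp only [Set.mem_ofPred_eq, Set.mem_empty_iff_false, iff_false]
  rintro ⟨h, h2, -⟩
  have := part_sup_pos h
  unfold perim at h2
  omega

lemma rP_congr {n : ℕ} {P Q : Multiset ℕ → Prop} (h : ∀ M, IsPartition M → (P M ↔ Q M)) :
    rP n P = rP n Q := by
  unfold rP
  congr 1
  ext M
  simp only [Set.mem_ofPred_eq]
  constructor
  · rintro ⟨a, b, c⟩; exact ⟨a, b, (h M a).1 c⟩
  · rintro ⟨a, b, c⟩; exact ⟨a, b, (h M a).2 c⟩

lemma sup_map_succ {M : Multiset ℕ} (h : M ≠ 0) : (M.map Nat.succ).sup = M.sup + 1 := by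
  apply le_antisymm
  · rw [Multiset.sup_le]
    intro b hb
    obtain ⟨x, hx, rfl⟩ := Multiset.mem_map.1 hb
    exact Nat.succ_le_succ (le_sup_of_mem' hx)
  · have h1 : 1 ≤ (M.map Nat.succ).sup := by
      obtain ⟨x, hx⟩ := Multiset.exists_mem_of_ne_zero h
      have := le_sup_of_mem' (Multiset.mem_map_of_mem Nat.succ hx)
      omega
    have h2 : M.sup ≤ (M.map Nat.succ).sup - 1 := by
      rw [Multiset.sup_le]
      intro b hb
      have := le_sup_of_mem' (Multiset.mem_map_of_mem Nat.succ hb)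
      omega
    omega

lemma rP_not_one (n : ℕ) (P : Multiset ℕ → Prop) :
    rP (n + 1) (fun M => P M ∧ 1 ∉ M) = rP n (fun M => P (M.map Nat.succ)) := by
  unfold rP
  symm
  rw [← Set.ncard_image_of_injective _ (Multiset.map_injective Nat.succ_injective)]
  symm
  congr 1
  ext M
  simp only [Set.mem_ofPred_eq, Set.mem_image]
  constructor
  · rintro ⟨hM, hn, hP, h1⟩
    have hmap : (M.map Nat.pred).map Nat.succ = M := by
      rw [Multiset.map_map]
      conv_rhs => rw [← Multiset.map_id M]
      apply Multiset.map_congr rfl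
      intro x hx
      exact Nat.succ_pred_eq_of_pos (hM.2 x hx)
    have hne : M.map Nat.pred ≠ 0 := by
      rw [Ne, Multiset.map_eq_zero]; exact hM.1
    refine ⟨M.map Nat.pred, ⟨⟨hne, ?_⟩, ?_, by rw [hmap]; exact hP⟩, hmap⟩
    · intro y hy
      obtain ⟨x, hx, rfl⟩ := Multiset.mem_map.1 hy
      have h3 := hM.2 x hx
      have h4 : x ≠ 1 := fun h => h1 (h ▸ hx)
      simp only [Nat.pred_eq_sub_one]
      omega
    · have := sup_map_succ hne
      rw [hmap] at this
      have hc : Multiset.card (M.map Nat.pred) = Multiset.card M := Multiset.card_map _ _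
      have := part_sup_pos hM
      unfold perim at *
      omega
  · rintro ⟨N, ⟨hN, hn, hP⟩, rfl⟩
    refine ⟨⟨?_, ?_⟩, ?_, hP, ?_⟩
    · rw [Ne, Multiset.map_eq_zero]; exact hN.1
    · intro y hy
      obtain ⟨x, hx, rfl⟩ := Multiset.mem_map.1 hy
      exact Nat.succ_pos x
    · have := sup_map_succ hN.1
      have := part_sup_pos hN
      have hc : Multiset.card (N.map Nat.succ) = Multiset.card N := Multiset.card_map _ _
      unfold perim at *
      omega
    · intro h
      obtain ⟨x, hx, h⟩ := Multiset.mem_map.1 h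
      have := hN.2 x hx
      omega

open Classical in
lemma rP_one (n : ℕ) (P : Multiset ℕ → Prop) :
    rP (n + 1) (fun M => P M ∧ 1 ∈ M) = rP n (fun M => P (1 ::ₘ M))
      + if n = 0 ∧ P {1} then 1 else 0 := by
  have hinj : Function.Injective (fun M : Multiset ℕ => 1 ::ₘ M) :=
    fun M N h => (Multiset.cons_inj_right 1).1 h
  have hs : {M : Multiset ℕ | IsPartition M ∧ perim M = n + 1 ∧ P M ∧ 1 ∈ M}
      = (fun M : Multiset ℕ => 1 ::ₘ M) ''
          {M : Multiset ℕ | IsPartition M ∧ perim M = n ∧ P (1 ::ₘ M)}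
        ∪ {M | M = {1} ∧ n = 0 ∧ P {1}} := by
    ext M
    simp only [Set.mem_ofPred_eq, Set.mem_image, Set.mem_union]
    constructor
    · rintro ⟨hM, hn, hP, h1⟩
      obtain ⟨N, rfl⟩ := Multiset.exists_cons_of_mem h1
      by_cases h0 : N = 0
      · right
        subst h0
        refine ⟨rfl, ?_, hP⟩
        simp [perim] at hn
        exact hn
      · left
        have hN : IsPartition N := ⟨h0, fun x hx => hM.2 x (Multiset.mem_cons_of_mem hx)⟩
        refine ⟨N, ⟨hN, ?_, hP⟩, rfl⟩
        have := part_sup_pos hN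
        simp only [perim, Multiset.sup_cons, Multiset.card_cons] at *
        rw [sup_eq_right.2 this.1] at hn
        omega
    · rintro (⟨N, ⟨hN, hn, hP⟩, rfl⟩ | ⟨rfl, rfl, hP⟩)
      · refine ⟨⟨Multiset.cons_ne_zero, ?_⟩, ?_, hP, Multiset.mem_cons_self _ _⟩
        · intro x hx
          rcases Multiset.mem_cons.1 hx with rfl | hx
          · exact Nat.one_pos
          · exact hN.2 x hx
        · have := part_sup_pos hN
          simp only [perim, Multiset.sup_cons, Multiset.card_cons] at *
          rw [sup_eq_right.2 this.1]
          omega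
      · refine ⟨⟨by simp, by simp⟩, by simp [perim], hP, by simp⟩
  have hfin := (finite_perim n (fun M => P (1 ::ₘ M))).image (fun M : Multiset ℕ => 1 ::ₘ M)
  have hfin2 : {M : Multiset ℕ | M = {1} ∧ n = 0 ∧ P {1}}.Finite :=
    (Set.finite_singleton ({1} : Multiset ℕ)).subset (fun M h => h.1)
  unfold rP
  rw [hs, Set.ncard_union_eq _ hfin hfin2, Set.ncard_image_of_injective _ hinj]
  · congr 1
    split_ifs with h
    · simp [h]
    · simp [h]
  · rw [Set.disjoint_left]
    rintro M ⟨N, ⟨hN, -, -⟩, rfl⟩ ⟨h, -⟩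
    apply hN.1
    exact hinj h

lemma rP_split (n : ℕ) (P Q : Multiset ℕ → Prop) :
    rP n P = rP n (fun M => P M ∧ ¬ Q M) + rP n (fun M => P M ∧ Q M) := by
  unfold rP
  rw [← Set.ncard_union_eq _ (finite_perim _ _) (finite_perim _ _)]
  · congr 1
    ext M
    simp only [Set.mem_ofPred_eq, Set.mem_union]
    tauto
  · rw [Set.disjoint_left]
    rintro M ⟨-, -, -, h⟩ ⟨-, -, -, h'⟩
    exact h h'

open Classical in
lemma rP_rec (n : ℕ) (P : Multiset ℕ → Prop) :
    rP (n + 1) P = rP n (fun M => P (M.map Nat.succ)) + rP n (fun M => P (1 ::ₘ M))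
      + if n = 0 ∧ P {1} then 1 else 0 := by
  rw [rP_split (n + 1) P (fun M => 1 ∈ M), rP_not_one, rP_one, add_assoc]

open Classical in
lemma genF_rec (P : Multiset ℕ → Prop) :
    genF P = PowerSeries.X * genF (fun M => P (M.map Nat.succ))
      + PowerSeries.X * genF (fun M => P (1 ::ₘ M))
      + if P {1} then PowerSeries.X else 0 := by
  ext n
  cases n with
  | zero =>
    simp only [genF, _root_.map_add, PowerSeries.coeff_zero_X_mul, PowerSeries.coeff_mk, rP_zero]
    split_ifs <;> simp
  | succ n =>
    simp only [genF, _root_.map_add, PowerSeries.coeff_succ_X_mul, PowerSeries.coeff_mk]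
    rw [rP_rec]
    by_cases h : P {1}
    · by_cases h0 : n = 0 <;> simp [h, h0, PowerSeries.coeff_X]
    · simp [h]

lemma genF_congr {P Q : Multiset ℕ → Prop} (h : ∀ M, IsPartition M → (P M ↔ Q M)) :
    genF P = genF Q := by
  ext n
  simp only [genF, PowerSeries.coeff_mk, rP_congr h]

lemma genF_false {P : Multiset ℕ → Prop} (h : ∀ M, IsPartition M → ¬ P M) :
    genF P = 0 := by
  ext n
  have : {M : Multiset ℕ | IsPartition M ∧ perim M = n ∧ P M} = ∅ := by
    ext M
    simp only [Set.mem_ofPred_eq, Set.mem_empty_iff_false, iff_false]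
    rintro ⟨a, -, c⟩
    exact h M a c
  simp [genF, rP, this]

/-- partitions with parts in a set -/
noncomputable def genS (S : ℕ → Prop) : PowerSeries ℤ := genF (fun M => ∀ x ∈ M, S x)

lemma genS_congr {S T : ℕ → Prop} (h : ∀ x, 0 < x → (S x ↔ T x)) : genS S = genS T := by
  apply genF_congr
  intro M hM
  exact forall₂_congr (fun x hx => h x (hM.2 x hx))

lemma genS_of_not {S : ℕ → Prop} (h : ¬ S 1) :
    genS S = PowerSeries.X * genS (fun x => S (x + 1)) := by
  unfold genS
  rw [genF_rec]
  rw [genF_false (P := fun M => ∀ x ∈ 1 ::ₘ M, S x)]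
  · simp [h]
  · intro M _ hP
    exact h (hP 1 (Multiset.mem_cons_self _ _))

lemma genS_of_mem {S : ℕ → Prop} (h : S 1) :
    genS S = PowerSeries.X * genS (fun x => S (x + 1)) + PowerSeries.X * genS S
      + PowerSeries.X := by
  conv_lhs => unfold genS
  rw [genF_rec]
  have h2 : genF (fun M => ∀ x ∈ 1 ::ₘ M, S x) = genS S := by
    apply genF_congr
    intro M _
    simp [h]
  rw [h2]
  simp [h, genS]

lemma genS_shift (t : ℕ) : ∀ (S : ℕ → Prop), (∀ x, 0 < x → x ≤ t → ¬ S x) →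
    genS S = PowerSeries.X ^ t * genS (fun x => S (x + t)) := by
  induction t with
  | zero => intro S _; simp
  | succ t ih =>
    intro S h
    rw [genS_of_not (h 1 one_pos (by omega)), ih (fun x => S (x + 1))]
    · rw [pow_succ', mul_assoc]
      simp only [add_assoc]
    · intro x hx hxt
      exact h (x + 1) (by omega) (by omega)

lemma mod_ne {D x y : ℕ} (h : x < y) (h2 : y < x + D) : x % D ≠ y % D := by
  intro h3
  have h4 : D ∣ y - x := (Nat.modEq_iff_dvd' h.le).1 h3
  have := Nat.le_of_dvd (by omega) h4
  omega

lemma ell_series (D m₁ m₂ : ℕ) (hm₁ : 0 < m₁) (hm : m₁ < m₂) (hm₂ : m₂ ≤ D) :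
    ((1 - PowerSeries.X) ^ 2 - PowerSeries.X ^ D) *
      genF (fun M => ∀ x ∈ M, x % D = m₁ % D ∨ x % D = m₂ % D)
      = PowerSeries.X ^ m₁ * (1 - PowerSeries.X) + PowerSeries.X ^ m₂ := by
  change _ * genS (fun x => x % D = m₁ % D ∨ x % D = m₂ % D) = _
  set S : ℕ → Prop := fun x => x % D = m₁ % D ∨ x % D = m₂ % D with hS
  obtain ⟨p, rfl⟩ : ∃ p, m₁ = p + 1 := ⟨m₁ - 1, by omega⟩
  obtain ⟨g, rfl⟩ : ∃ g, m₂ = p + 1 + g + 1 := ⟨m₂ - p - 2, by omega⟩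
  obtain ⟨e, rfl⟩ : ∃ e, D = g + e + 2 := ⟨D - g - 2, by omega⟩
  have e1 := genS_shift p S (by
    intro x hx hxp h
    rcases h with h | h
    · exact mod_ne (by omega) (by omega) h
    · exact mod_ne (by omega) (by omega) h)
  have e2 := genS_of_mem (S := fun x => S (x + p)) (by left; congr 1; omega)
  have e3 := genS_shift g (fun x => S (x + 1 + p)) (by
    intro x hx hxp h
    rcases h with h | h
    · exact mod_ne (by omega) (by omega) h.symm
    · exact mod_ne (by omega) (by omega) h)
  have e4 := genS_of_mem (S := fun x => S (x + g + 1 + p)) (by right; congr 1; omega)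
  have e5 := genS_shift e (fun x => S (x + 1 + g + 1 + p)) (by
    intro x hx hxp h
    rcases h with h | h
    · exact mod_ne (by omega) (by omega) h.symm
    · exact mod_ne (by omega) (by omega) h.symm)
  have e6 : genS (fun x => S (x + e + 1 + g + 1 + p)) = genS (fun x => S (x + p)) := by
    apply genS_congr
    intro x _
    have : (x + e + 1 + g + 1 + p) % (g + e + 2) = (x + p) % (g + e + 2) := by
      rw [show x + e + 1 + g + 1 + p = x + p + (g + e + 2) by omega, Nat.add_mod_right]
    simp only [hS, this]
  rw [e6] at e5
  rw [e1]
  rw [e5] at e4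
  rw [e3] at e2
  generalize genS (fun x => S (x + p)) = A at *
  generalize genS (fun x => S (x + g + 1 + p)) = B at *
  linear_combination (PowerSeries.X ^ p * (1 - PowerSeries.X)) * e2
    + PowerSeries.X ^ (p + g + 1) * e4

/-- the predicate of `hP` -/
def hPred (d a : ℕ) (M : Multiset ℕ) : Prop :=
  M.Nodup ∧ (∀ x ∈ M, a ≤ x) ∧ ∀ x ∈ M, ∀ y ∈ M, x ≠ y → d ≤ max x y - min x y

lemma hPred_map (d a : ℕ) (M : Multiset ℕ) : hPred d (a + 1) (M.map Nat.succ) ↔ hPred d a M := by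
  unfold hPred
  rw [Multiset.nodup_map_iff_of_injective Nat.succ_injective]
  simp only [Multiset.mem_map, forall_exists_index, and_imp, forall_apply_eq_imp_iff₂,
    Nat.succ_eq_add_one]
  refine and_congr Iff.rfl (and_congr ?_ ?_)
  · exact forall₂_congr (fun x _ => by omega)
  · refine forall₂_congr (fun x _ => forall₂_congr (fun y _ => ?_))
    rw [max_add_add_right, min_add_add_right]
    constructor
    · intro h1 h2; have := h1 (by omega); omega
    · intro h1 h2; have := h1 (by omega); omega

lemma hPred_cons (d : ℕ) (hd : 1 ≤ d) (M : Multiset ℕ) (hM : IsPartition M) :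
    hPred d 1 (1 ::ₘ M) ↔ hPred d (d + 1) M := by
  unfold hPred
  rw [Multiset.nodup_cons]
  constructor
  · rintro ⟨⟨h1, h2⟩, h3, h4⟩
    refine ⟨h2, ?_, ?_⟩
    · intro x hx
      have hx1 : x ≠ 1 := fun h => h1 (h ▸ hx)
      have := h4 x (Multiset.mem_cons_of_mem hx) 1 (Multiset.mem_cons_self _ _) hx1
      have := hM.2 x hx
      omega
    · intro x hx y hy
      exact h4 x (Multiset.mem_cons_of_mem hx) y (Multiset.mem_cons_of_mem hy)
  · rintro ⟨h2, h3, h4⟩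
    refine ⟨⟨fun h => ?_, h2⟩, ?_, ?_⟩
    · have := h3 1 h; omega
    · intro x hx
      rcases Multiset.mem_cons.1 hx with rfl | hx
      · exact le_refl _
      · exact hM.2 x hx
    · intro x hx y hy hxy
      rcases Multiset.mem_cons.1 hx with rfl | hx <;> rcases Multiset.mem_cons.1 hy with rfl | hy
      · exact absurd rfl hxy
      · have := h3 y hy; omega
      · have := h3 x hx; omega
      · exact h4 x hx y hy hxy

lemma h_succ (d a : ℕ) (ha : 1 ≤ a) :
    genF (hPred d (a + 1)) = PowerSeries.X * genF (hPred d a) := by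
  rw [genF_rec, genF_false (P := fun M => hPred d (a + 1) (1 ::ₘ M)),
    genF_congr (fun M _ => hPred_map d a M), if_neg]
  · simp
  · intro h
    have := h.2.1 1 (by simp)
    omega
  · intro M _ h
    have := h.2.1 1 (Multiset.mem_cons_self _ _)
    omega

lemma h_pow (d a : ℕ) :
    genF (hPred d (a + 1)) = PowerSeries.X ^ a * genF (hPred d 1) := by
  induction a with
  | zero => simp
  | succ a ih => rw [h_succ d (a + 1) (by omega), ih]; ring

lemma h_one (d : ℕ) (hd : 1 ≤ d) :
    (1 - PowerSeries.X - PowerSeries.X ^ (d + 1)) * genF (hPred d 1) = PowerSeries.X := by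
  have h := genF_rec (hPred d 1)
  have h1 : genF (fun M => hPred d 1 (M.map Nat.succ)) = genF (hPred d 1) := by
    apply genF_congr
    intro M hM
    rw [hPred_map d 0]
    unfold hPred
    refine and_congr Iff.rfl (and_congr ?_ Iff.rfl)
    exact ⟨fun _ x hx => hM.2 x hx, fun _ x _ => Nat.zero_le x⟩
  rw [h1, genF_congr (fun M hM => hPred_cons d hd M hM), h_pow d d, if_pos] at h
  · linear_combination h
  · refine ⟨by simp, by simp, ?_⟩
    intro x hx y hy hxy
    rw [Multiset.mem_singleton] at hx hy
    omega

lemma h_series (d a : ℕ) (hd : 1 ≤ d) (ha : 1 ≤ a) :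
    ((1 - PowerSeries.X) ^ 2 - PowerSeries.X ^ (2 * d + 2)) * genF (hPred d a)
      = PowerSeries.X ^ a * (1 - PowerSeries.X) + PowerSeries.X ^ (a + d + 1) := by
  obtain ⟨p, rfl⟩ : ∃ p, a = p + 1 := ⟨a - 1, by omega⟩
  rw [h_pow]
  linear_combination (PowerSeries.X ^ p * (1 - PowerSeries.X + PowerSeries.X ^ (d + 1)))
    * h_one d hd

/-- coefficients diverge -/
def CoeffDiv (E : PowerSeries ℤ) : Prop := Tendsto (fun n => PowerSeries.coeff n E) atTop atTop

lemma CoeffDiv.add {E F : PowerSeries ℤ} (h : CoeffDiv E) (h2 : CoeffDiv F) : CoeffDiv (E + F) := by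
  unfold CoeffDiv at *
  simp only [_root_.map_add]
  exact h.atTop_add_atTop h2

lemma CoeffDiv.Xmul {E : PowerSeries ℤ} (h : CoeffDiv E) (k : ℕ) : CoeffDiv (PowerSeries.X ^ k * E) := by
  unfold CoeffDiv at *
  rw [← tendsto_add_atTop_iff_nat k]
  simpa [PowerSeries.coeff_X_pow_mul] using h

lemma CoeffDiv.geom {E : PowerSeries ℤ} (h : CoeffDiv E) (p t : ℕ) :
    ∃ G, G * (1 - PowerSeries.X) = (PowerSeries.X ^ p - PowerSeries.X ^ (p + t + 1))
      ∧ CoeffDiv (G * E) := by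
  induction t with
  | zero => exact ⟨PowerSeries.X ^ p, by ring, h.Xmul p⟩
  | succ t ih =>
    obtain ⟨G, h1, h2⟩ := ih
    refine ⟨G + PowerSeries.X ^ (p + t + 1), by linear_combination h1, ?_⟩
    rw [add_mul]
    exact h2.add (h.Xmul _)

lemma exists_B (D : ℕ) (hD : 1 ≤ D) : ∃ B : PowerSeries ℤ,
    B * ((1 - PowerSeries.X) ^ 2 - PowerSeries.X ^ D) = 1 ∧
    CoeffDiv (B * (1 - PowerSeries.X)) ∧ CoeffDiv (B * (1 - PowerSeries.X) * (1 - PowerSeries.X)) := by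
  have hu : IsUnit ((1 - PowerSeries.X) ^ 2 - PowerSeries.X ^ D : PowerSeries ℤ) := by
    rw [PowerSeries.isUnit_iff_constantCoeff]
    simp [show D ≠ 0 by omega]
  obtain ⟨B, hB⟩ := hu.exists_left_inv
  refine ⟨B, hB, ?_⟩
  set A := B * (1 - PowerSeries.X) with hA
  have hBA : B = A + PowerSeries.X * B := by rw [hA]; ring
  have hAC : A = 1 + PowerSeries.X ^ D * B + PowerSeries.X * A := by
    rw [hA]; linear_combination hB
  have hC : A * (1 - PowerSeries.X) = 1 + PowerSeries.X ^ D * B := by linear_combination hAC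
  have b0 : PowerSeries.coeff 0 B = PowerSeries.coeff 0 A := by
    conv_lhs => rw [hBA]
    simp
  have a0 : PowerSeries.coeff 0 A = 1 := by
    conv_lhs => rw [hAC]
    simp [show D ≠ 0 by omega]
  have bs (n : ℕ) : PowerSeries.coeff (n + 1) B
      = PowerSeries.coeff (n + 1) A + PowerSeries.coeff n B := by
    conv_lhs => rw [hBA]
    rw [_root_.map_add, PowerSeries.coeff_succ_X_mul]
  have as (n : ℕ) : PowerSeries.coeff (n + 1) A
      = PowerSeries.coeff (n + 1) (PowerSeries.X ^ D * B) + PowerSeries.coeff n A := by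
    conv_lhs => rw [hAC]
    rw [_root_.map_add, _root_.map_add, PowerSeries.coeff_succ_X_mul]
    simp [PowerSeries.coeff_one]
  have key : ∀ n, 1 ≤ PowerSeries.coeff n A ∧ (n : ℤ) ≤ PowerSeries.coeff n B := by
    intro n
    induction n using Nat.strong_induction_on with
    | _ n ih =>
      cases n with
      | zero => rw [b0, a0]; simp
      | succ n =>
        have h1 := ih n (by omega)
        have h2 : 0 ≤ PowerSeries.coeff (n + 1) (PowerSeries.X ^ D * B) := by
          rw [PowerSeries.coeff_X_pow_mul']
          split_ifs with h
          · have := (ih (n + 1 - D) (by omega)).2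
            omega
          · exact le_refl _
        rw [bs, as]
        push_cast
        omega
  have hBdiv : CoeffDiv B := tendsto_atTop_mono (fun n => (key n).2) tendsto_natCast_atTop_atTop
  have hXB : CoeffDiv (PowerSeries.X ^ D * B) := hBdiv.Xmul D
  constructor
  · unfold CoeffDiv at hXB ⊢
    rw [← tendsto_add_atTop_iff_nat 1] at hXB ⊢
    refine tendsto_atTop_mono (fun n => ?_) hXB
    have := as n
    have := (key n).1
    omega
  · rw [hC]
    unfold CoeffDiv at hXB ⊢
    refine tendsto_atTop_mono (fun n => ?_) hXB
    rw [_root_.map_add, PowerSeries.coeff_one]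
    split_ifs <;> omega

lemma main_div (D p q r s : ℕ) (hD : 1 ≤ D) (hpq : p ≤ q) (hrs : r ≤ s) (hne : ¬ (p = q ∧ r = s))
    (E : PowerSeries ℤ)
    (hE : ((1 - PowerSeries.X) ^ 2 - PowerSeries.X ^ D) * E
      = (PowerSeries.X ^ p - PowerSeries.X ^ q) * (1 - PowerSeries.X)
        + (PowerSeries.X ^ r - PowerSeries.X ^ s)) : CoeffDiv E := by
  obtain ⟨B, hB, hA, hC⟩ := exists_B D hD
  have hE' : E = B * ((PowerSeries.X ^ p - PowerSeries.X ^ q) * (1 - PowerSeries.X)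
        + (PowerSeries.X ^ r - PowerSeries.X ^ s)) := by
    rw [← hE, ← mul_assoc, hB, one_mul]
  rcases eq_or_lt_of_le hpq with rfl | hpq
  · have : r < s := by omega
    obtain ⟨t, rfl⟩ : ∃ t, s = r + t + 1 := ⟨s - r - 1, by omega⟩
    obtain ⟨G, h1, h2⟩ := hA.geom r t
    rw [hE', ← h1]
    convert h2 using 1
    ring
  · obtain ⟨u, rfl⟩ : ∃ u, q = p + u + 1 := ⟨q - p - 1, by omega⟩
    obtain ⟨G', h1', h2'⟩ := hC.geom p u
    rcases eq_or_lt_of_le hrs with rfl | hrs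
    · rw [hE', ← h1']
      convert h2' using 1
      ring
    · obtain ⟨t, rfl⟩ : ∃ t, s = r + t + 1 := ⟨s - r - 1, by omega⟩
      obtain ⟨G, h1, h2⟩ := hA.geom r t
      rw [hE', ← h1, ← h1']
      convert h2'.add h2 using 1
      ring

theorem stmt_7 (d a m₁ m₂ : ℕ) (hd : 1 ≤ d) (ha1 : 1 ≤ a) (ha2 : a ≤ d + 1)
    (hm₁ : 0 < m₁) (hm : m₁ < m₂) (hm₂ : m₂ ≤ 2 * d + 2) :
    (m₁ = a ∧ m₂ = a + d + 1 →
      Tendsto (fun n => (hP d a n : ℤ) - (ellP (2 * d + 2) m₁ m₂ n : ℤ)) atTop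
        (nhds 0)) ∧
    (a ≤ m₁ ∧ a + d + 1 ≤ m₂ ∧ ¬(m₁ = a ∧ m₂ = a + d + 1) →
      Tendsto (fun n => (hP d a n : ℤ) - (ellP (2 * d + 2) m₁ m₂ n : ℤ)) atTop atTop) ∧
    (m₁ ≤ a ∧ m₂ ≤ a + d + 1 ∧ ¬(m₁ = a ∧ m₂ = a + d + 1) →
      Tendsto (fun n => (hP d a n : ℤ) - (ellP (2 * d + 2) m₁ m₂ n : ℤ)) atTop atBot) := by
  have hH := h_series d a hd ha1
  have hL := ell_series (2 * d + 2) m₁ m₂ hm₁ hm hm₂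
  set H := genF (hPred d a) with hHdef
  set L := genF (fun M => ∀ x ∈ M, x % (2 * d + 2) = m₁ % (2 * d + 2) ∨
    x % (2 * d + 2) = m₂ % (2 * d + 2)) with hLdef
  have hdiff : ∀ n, (hP d a n : ℤ) - (ellP (2 * d + 2) m₁ m₂ n : ℤ)
      = PowerSeries.coeff n (H - L) := by
    intro n
    rw [map_sub, hHdef, hLdef]
    simp only [genF, PowerSeries.coeff_mk]
    rfl
  simp only [hdiff]
  refine ⟨?_, ?_, ?_⟩
  · rintro ⟨rfl, rfl⟩
    obtain ⟨B, hB, -, -⟩ := exists_B (2 * d + 2) (by omega)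
    have : H - L = 0 := by
      linear_combination B * (hH - hL) - (H - L) * hB
    simp only [this, map_zero]
    exact tendsto_const_nhds
  · rintro ⟨h1, h2, h3⟩
    exact main_div (2 * d + 2) a m₁ (a + d + 1) m₂ (by omega) h1 h2 (by omega) (H - L)
      (by linear_combination hH - hL)
  · rintro ⟨h1, h2, h3⟩
    have := main_div (2 * d + 2) m₁ a m₂ (a + d + 1) (by omega) h1 h2 (by omega) (L - H)
      (by linear_combination hL - hH)
    unfold CoeffDiv at this
    rw [← tendsto_neg_atTop_iff]
    refine this.congr (fun n => ?_)
    rw [← _root_.map_neg, neg_sub]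
end

section
/- For integers 0 < a < b ≤ d and n ≥ 1, ℓ_d^{(a,b)}(n) = ∑_{k ≥ 0, a+dk ≤ n} C(2k + n − a − dk, n − a − dk) + ∑_{k ≥ 0, b+dk ≤ n} C(2k + 1 + n − b − dk, n − b − dk), where C denotes the binomial coefficient. -/
open Multiset Finset Filter

lemma card_sym11 (s : Finset ℕ) (k : ℕ) : (s.sym k).card = s.card.multichoose k := by
  classical
  have h : s.sym k = (Finset.univ : Finset (Sym s k)).image (Sym.map Subtype.val) := by
    ext m
    simp only [Finset.mem_sym_iff, Finset.mem_image, Finset.mem_univ, true_and]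
    constructor
    · intro h
      refine ⟨m.attach.map (fun x => ⟨x.1, h x.1 x.2⟩), ?_⟩
      rw [Sym.map_map]
      exact Sym.attach_map_coe m
    · rintro ⟨t, rfl⟩ x hx
      obtain ⟨y, _, rfl⟩ := Sym.mem_map.1 hx
      exact y.2
  rw [h, Finset.card_image_of_injective _ (Sym.map_injective Subtype.val_injective k),
    Finset.card_univ, Sym.card_sym_eq_multichoose, Fintype.card_coe]

def G11 (d a b N : ℕ) : Finset ℕ :=
  (Finset.Icc 1 N).filter (fun x => x % d = a % d ∨ x % d = b % d)

lemma resid11 (d a x : ℕ) (ha : 0 < a) (had : a ≤ d) (hx : 0 < x) :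
    x % d = a % d ↔ ∃ k, x = a + d * k := by
  constructor
  · intro h
    have hax : a ≤ x := by
      by_contra hlt
      push Not at hlt
      rw [Nat.mod_eq_of_lt (by omega : x < d)] at h
      rcases Nat.lt_or_ge a d with h1 | h1
      · rw [Nat.mod_eq_of_lt h1] at h; omega
      · have : a = d := by omega
        subst this
        simp at h; omega
    obtain ⟨k, hk⟩ := (Nat.modEq_iff_dvd' hax).1 (show a ≡ x [MOD d] from h.symm)
    exact ⟨k, by omega⟩
  · rintro ⟨k, rfl⟩
    simp

lemma G11_eq (d a b N : ℕ) (ha : 0 < a) (hab : a < b) (hb : b ≤ d) :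
    G11 d a b N =
      ((Finset.range (N + 1)).filter (fun k => a + d * k ≤ N)).image (fun k => a + d * k) ∪
      ((Finset.range (N + 1)).filter (fun k => b + d * k ≤ N)).image (fun k => b + d * k) := by
  have key : ∀ c k, c + d * k ≤ N → k < N + 1 := by
    intro c k h
    have : 1 * k ≤ d * k := Nat.mul_le_mul_right k (by omega)
    omega
  ext x
  simp only [G11, Finset.mem_filter, Finset.mem_Icc, Finset.mem_union, Finset.mem_image,
    Finset.mem_range]
  constructor
  · rintro ⟨⟨h1, h2⟩, h | h⟩
    · obtain ⟨k, rfl⟩ := (resid11 d a x ha (by omega) h1).1 h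
      exact Or.inl ⟨k, ⟨key _ _ h2, h2⟩, rfl⟩
    · obtain ⟨k, rfl⟩ := (resid11 d b x (by omega) (by omega) h1).1 h
      exact Or.inr ⟨k, ⟨key _ _ h2, h2⟩, rfl⟩
  · rintro (⟨k, ⟨_, h2⟩, rfl⟩ | ⟨k, ⟨_, h2⟩, rfl⟩)
    · exact ⟨⟨by omega, h2⟩, Or.inl (by simp)⟩
    · exact ⟨⟨by omega, h2⟩, Or.inr (by simp)⟩

lemma inj11 (d c : ℕ) (hd : 0 < d) : Function.Injective (fun k => c + d * k) := by
  intro x y h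
  simpa [hd.ne'] using h

lemma sum_G11 (d a b N : ℕ) (ha : 0 < a) (hab : a < b) (hb : b ≤ d) (f : ℕ → ℕ) :
    ∑ x ∈ G11 d a b N, f x =
      (∑ k ∈ (Finset.range (N + 1)).filter (fun k => a + d * k ≤ N), f (a + d * k)) +
      ∑ k ∈ (Finset.range (N + 1)).filter (fun k => b + d * k ≤ N), f (b + d * k) := by
  rw [G11_eq d a b N ha hab hb, Finset.sum_union, Finset.sum_image, Finset.sum_image]
  · exact (inj11 d b (by omega)).injOn
  · exact (inj11 d a (by omega)).injOn
  · rw [Finset.disjoint_left]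
    simp only [Finset.mem_image, not_exists]
    rintro x ⟨k, _, rfl⟩ j ⟨_, h⟩
    rcases lt_trichotomy j k with hjk | rfl | hjk
    · have : d * (j + 1) ≤ d * k := Nat.mul_le_mul_left d hjk
      rw [Nat.mul_add] at this
      omega
    · omega
    · have : d * (k + 1) ≤ d * j := Nat.mul_le_mul_left d hjk
      rw [Nat.mul_add] at this
      omega

lemma filt11 (d c N m : ℕ) (hd : 0 < d) (h1 : ∀ k, c + d * k ≤ N ↔ k < m) :
    ((Finset.range (N + 1)).filter (fun k => c + d * k ≤ N)).card = m := by
  have : (Finset.range (N + 1)).filter (fun k => c + d * k ≤ N) = Finset.range m := by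
    ext k
    simp only [Finset.mem_filter, Finset.mem_range]
    rw [h1]
    refine ⟨fun h => h.2, fun h => ⟨?_, h⟩⟩
    have h2 := (h1 k).2 h
    have : 1 * k ≤ d * k := Nat.mul_le_mul_right k (by omega)
    omega
  rw [this, Finset.card_range]

lemma thr11 (d c e k : ℕ) (hc : c ≤ e) (he : e < c + d) (j : ℕ) :
    c + d * j ≤ e + d * k ↔ j < k + 1 := by
  constructor
  · intro h
    by_contra hlt
    have : d * (k + 1) ≤ d * j := Nat.mul_le_mul_left d (by omega)
    rw [Nat.mul_add] at this
    omega
  · intro h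
    have : d * j ≤ d * k := Nat.mul_le_mul_left d (by omega)
    omega

lemma thr11' (d c e k : ℕ) (hc : e < c) (he : c ≤ e + d) (j : ℕ) :
    c + d * j ≤ e + d * k ↔ j < k := by
  constructor
  · intro h
    by_contra hlt
    have : d * k ≤ d * j := Nat.mul_le_mul_left d (by omega)
    omega
  · intro h
    have : d * (j + 1) ≤ d * k := Nat.mul_le_mul_left d (by omega)
    rw [Nat.mul_add] at this
    omega

lemma card_G11_a (d a b k : ℕ) (ha : 0 < a) (hab : a < b) (hb : b ≤ d) :
    (G11 d a b (a + d * k)).card = 2 * k + 1 := by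
  rw [Finset.card_eq_sum_ones, sum_G11 d a b _ ha hab hb, ← Finset.card_eq_sum_ones,
    ← Finset.card_eq_sum_ones,
    filt11 d a _ (k + 1) (by omega) (thr11 d a a k le_rfl (by omega)),
    filt11 d b _ k (by omega) (thr11' d b a k (by omega) (by omega))]
  omega

lemma card_G11_b (d a b k : ℕ) (ha : 0 < a) (hab : a < b) (hb : b ≤ d) :
    (G11 d a b (b + d * k)).card = 2 * k + 2 := by
  rw [Finset.card_eq_sum_ones, sum_G11 d a b _ ha hab hb, ← Finset.card_eq_sum_ones,
    ← Finset.card_eq_sum_ones,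
    filt11 d a _ (k + 1) (by omega) (thr11 d a b k (by omega) (by omega)),
    filt11 d b _ (k + 1) (by omega) (thr11 d b b k le_rfl (by omega))]
  omega

lemma sup_mem11 (M : Multiset ℕ) (h : M ≠ 0) : M.sup ∈ M := by
  induction M using Multiset.induction with
  | empty => exact absurd rfl h
  | cons x s ih =>
    rw [Multiset.sup_cons]
    by_cases hs : s = 0
    · subst hs; simp
    · rcases le_total x s.sup with h1 | h1
      · rw [sup_eq_right.2 h1]; exact Multiset.mem_cons_of_mem (ih hs)
      · rw [sup_eq_left.2 h1]; exact Multiset.mem_cons_self _ _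

lemma ell11 (d a b n : ℕ) (hn : 1 ≤ n) :
    ellP d a b n = ∑ L ∈ G11 d a b n, (G11 d a b L).card.multichoose (n - L) := by
  classical
  set F : ℕ → Finset (Multiset ℕ) := fun L =>
    ((G11 d a b L).sym (n - L)).image (fun s : Sym ℕ (n - L) => L ::ₘ (s : Multiset ℕ)) with hF
  have hsup : ∀ L, ∀ M ∈ F L, M.sup = L := by
    intro L M hM
    simp only [hF, Finset.mem_image, Finset.mem_sym_iff] at hM
    obtain ⟨s, hs, rfl⟩ := hM
    rw [Multiset.sup_cons, sup_eq_left, Multiset.sup_le]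
    intro x hx
    have := hs x hx
    simp only [G11, Finset.mem_filter, Finset.mem_Icc] at this
    exact this.1.2
  have hset : {M : Multiset ℕ | IsPartition M ∧ perim M = n ∧
      ∀ x ∈ M, x % d = a % d ∨ x % d = b % d} = ((G11 d a b n).biUnion F : Finset _) := by
    ext M
    simp only [Set.mem_ofPred_eq, Finset.coe_biUnion, Set.mem_iUnion, Finset.mem_coe]
    constructor
    · rintro ⟨⟨h0, hpos⟩, hp, hr⟩
      have hm := sup_mem11 M h0
      obtain ⟨t, ht⟩ := Multiset.exists_cons_of_mem hm
      have hc : Multiset.card M = Multiset.card t + 1 := by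
        conv_lhs => rw [ht]
        simp
      have hp' : M.sup + Multiset.card t = n := by
        unfold perim at hp; omega
      have h1 := hpos _ hm
      refine ⟨M.sup, ?_, ?_⟩
      · simp only [G11, Finset.mem_filter, Finset.mem_Icc]
        exact ⟨⟨h1, by omega⟩, hr _ hm⟩
      · simp only [hF, Finset.mem_image, Finset.mem_sym_iff]
        refine ⟨⟨t, by omega⟩, ?_, ht.symm⟩
        intro x hx
        have hxM : x ∈ M := by
          rw [ht]; exact Multiset.mem_cons_of_mem hx
        simp only [G11, Finset.mem_filter, Finset.mem_Icc]
        exact ⟨⟨hpos x hxM, Multiset.le_sup hxM⟩, hr x hxM⟩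
    · rintro ⟨L, hL, hM⟩
      have hs := hsup L M hM
      simp only [hF, Finset.mem_image, Finset.mem_sym_iff] at hM
      obtain ⟨s, hsm, rfl⟩ := hM
      simp only [G11, Finset.mem_filter, Finset.mem_Icc] at hL hsm
      refine ⟨⟨Multiset.cons_ne_zero, ?_⟩, ?_, ?_⟩
      · intro x hx
        rcases Multiset.mem_cons.1 hx with rfl | hx
        · exact hL.1.1
        · exact (hsm x hx).1.1
      · unfold perim
        rw [hs, Multiset.card_cons, Sym.card_coe]
        omega
      · intro x hx
        rcases Multiset.mem_cons.1 hx with rfl | hx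
        · exact hL.2
        · exact (hsm x hx).2
  unfold ellP rP
  rw [hset, Set.ncard_coe_finset, Finset.card_biUnion]
  · refine Finset.sum_congr rfl fun L _ => ?_
    simp only [hF]
    rw [Finset.card_image_of_injective, card_sym11]
    intro s t h
    exact Sym.coe_injective ((Multiset.cons_inj_right L).1 h)
  · intro L _ L' _ hne
    rw [Function.onFun_apply, Finset.disjoint_left]
    intro M h1 h2
    exact hne ((hsup L M h1).symm.trans (hsup L' M h2))

theorem stmt_11 (d a b n : ℕ) (ha : 0 < a) (hab : a < b) (hb : b ≤ d) (hn : 1 ≤ n) :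
    ellP d a b n =
      (∑ k ∈ (Finset.range (n + 1)).filter (fun k => a + d * k ≤ n),
        Nat.choose (2 * k + (n - (a + d * k))) (n - (a + d * k))) +
      ∑ k ∈ (Finset.range (n + 1)).filter (fun k => b + d * k ≤ n),
        Nat.choose (2 * k + 1 + (n - (b + d * k))) (n - (b + d * k)) := by
  rw [ell11 d a b n hn, sum_G11 d a b n ha hab hb]
  congr 1
  · refine Finset.sum_congr rfl fun k _ => ?_
    rw [card_G11_a d a b k ha hab hb, Nat.multichoose_eq]
    congr 1
    omega
  · refine Finset.sum_congr rfl fun k _ => ?_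
    rw [card_G11_b d a b k ha hab hb, Nat.multichoose_eq]
    congr 1
    omega
end
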